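/- Define the bilinear map B : ℝ⁴ × ℝ⁴ → ℝ⁴ for 3-matchings by B(u,v) = (u₁v₁+u₁v₂, u₁v₃+u₂v₁+u₂v₂, u₃v₁+u₄v₄, u₄v₁), with V₀ = (1,0,0,1) and F = (1,1,1,0). Letting α ∈ (1,2) be the real root of x⁴ − x³ − 1, there exists a finite set X ⊆ ℝ⁴ (with coordinates polynomial in α) containing V₀/α in its convex hull such that B(u,v) ∈ conv(X) for all u,v ∈ X; consequently the number of 3-matchings of every tree of order n is at most C·αⁿ for some constant C. -/

import Mathlib

/-- distance between two edges of a graph: the minimum graph distance between an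
endpoint of one and an endpoint of the other. -/
noncomputable def edgeDist {V : Type*} (G : SimpleGraph V) (e f : Sym2 V) : ℕ :=
  sInf {d : ℕ | ∃ u ∈ e, ∃ v ∈ f, d = G.dist u v}

/-- an `r`-matching: a set of edges of `G`, any two distinct ones at distance at
least `r`. -/
def IsRMatching {V : Type*} (G : SimpleGraph V) (r : ℕ) (M : Set (Sym2 V)) : Prop :=
  M ⊆ G.edgeSet ∧ ∀ e ∈ M, ∀ f ∈ M, e ≠ f → r ≤ edgeDist G e f

/-!
The bound comes from an invariant polytope. Put `b = α⁻¹`, so that `b + b ^ 4 = 1`. Take the state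
vectors of the paths on one to four vertices, scaled by `b` to the number of vertices, together
with two axis vectors; the nonnegative vectors dominated by their convex hull form a convex set
that is closed under `B`. Membership is tight for the path on five vertices, whose scaled state is
exactly `b` times that of the path on four vertices plus `b ^ 4` times that of a single vertex:
this is where the equation for `α` comes from. Dominated vectors are harmless because `B` is
monotone on nonnegative vectors, and they become an honest convex hull once each generator is
accompanied by all vectors obtained from it by annihilating coordinates.

Cutting an edge at the root of a tree leaves two rooted trees, and restricting matchings to them
shows that the state of the tree is at most `B` of their states. By induction the state of a tree of
order `n`, scaled by `b ^ n`, stays in the polytope, on which the sum of the first three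
coordinates (the number of matchings) is at most `2`.
-/

section LowerHull

variable {𝕜 E : Type*} [CommRing 𝕜] [PartialOrder 𝕜] [AddCommGroup E] [PartialOrder E]
  [Module 𝕜 E]

variable (𝕜) in
/-- The nonnegative vectors dominated by a point of the convex hull of `S`. -/
def lowerHull (S : Set E) : Set E := Set.Ici 0 ∩ lowerClosure (convexHull 𝕜 S)

theorem mem_lowerHull_of_le {S : Set E} {v w : E} (hw : 0 ≤ w) (hwv : w ≤ v)
    (hv : v ∈ lowerHull 𝕜 S) : w ∈ lowerHull 𝕜 S :=
  ⟨hw, (lowerClosure _).lower hwv hv.2⟩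

theorem subset_lowerHull {S : Set E} (hS : S ⊆ Set.Ici 0) : S ⊆ lowerHull 𝕜 S :=
  Set.subset_inter hS ((subset_convexHull 𝕜 S).trans subset_lowerClosure)

theorem lowerHull_min {S T : Set E} (hST : S ⊆ T) (hT : Convex 𝕜 T)
    (hlower : ∀ ⦃w v⦄, 0 ≤ w → w ≤ v → v ∈ T → w ∈ T) : lowerHull 𝕜 S ⊆ T := by
  rintro w ⟨hw, p, hp, hwp⟩
  exact hlower hw hwp (convexHull_min hST hT hp)

theorem convex_lowerHull [IsOrderedAddMonoid E] [PosSMulMono 𝕜 E] (S : Set E) :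
    Convex 𝕜 (lowerHull 𝕜 S) := by
  refine (convex_Ici 0).inter ?_
  rintro x ⟨p, hp, hxp⟩ y ⟨q, hq, hyq⟩ a b ha hb hab
  exact ⟨a • p + b • q, convex_convexHull 𝕜 S hp hq ha hb hab, by gcongr⟩

theorem bilin_mem_lowerHull [IsOrderedAddMonoid E] {F G : Type*} [AddCommGroup F]
    [PartialOrder F] [IsOrderedAddMonoid F] [Module 𝕜 F] [AddCommGroup G] [PartialOrder G]
    [IsOrderedAddMonoid G] [Module 𝕜 G] [PosSMulMono 𝕜 G] {B : E →ₗ[𝕜] F →ₗ[𝕜] G}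
    (hB : ∀ ⦃u v⦄, 0 ≤ u → 0 ≤ v → 0 ≤ B u v) {S : Set E} {T : Set F} {U : Set G}
    (hT : T ⊆ Set.Ici 0) (hST : ∀ s ∈ S, ∀ t ∈ T, B s t ∈ lowerHull 𝕜 U)
    {u : E} (hu : u ∈ lowerHull 𝕜 S) {v : F} (hv : v ∈ lowerHull 𝕜 T) :
    B u v ∈ lowerHull 𝕜 U := by
  have hleft : ∀ t ∈ T, lowerHull 𝕜 S ⊆ {u | B u t ∈ lowerHull 𝕜 U} := fun t ht =>
    lowerHull_min (fun s hs => hST s hs t ht) ((convex_lowerHull U).linear_preimage (B.flip t))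
      fun w v hw hwv hv => mem_lowerHull_of_le (hB hw (hT ht))
        (by simpa only [map_sub, LinearMap.sub_apply, sub_nonneg] using
          hB (sub_nonneg.2 hwv) (hT ht)) hv
  exact lowerHull_min (T := {v | B u v ∈ lowerHull 𝕜 U}) (fun t ht => hleft t ht hu)
    ((convex_lowerHull U).linear_preimage (B u))
    (fun w v hw hwv hv => mem_lowerHull_of_le (hB hu.1 hw)
      (by simpa only [map_sub, sub_nonneg] using hB hu.1 (sub_nonneg.2 hwv)) hv) hv

end LowerHull

section OrderedField

variable {𝕜 E : Type*} [Field 𝕜] [LinearOrder 𝕜] [IsStrictOrderedRing 𝕜] [AddCommGroup E]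
  [PartialOrder E] [IsOrderedAddMonoid E] [Module 𝕜 E] [PosSMulMono 𝕜 E]

theorem smul_mem_lowerHull {S : Set E} {x : E} (hx : x ∈ lowerHull 𝕜 S) {a : 𝕜} (ha : 0 ≤ a)
    (ha1 : a ≤ 1) : a • x ∈ lowerHull 𝕜 S :=
  mem_lowerHull_of_le (smul_nonneg ha hx.1) (smul_le_of_le_one_left hx.1 ha1) hx

theorem sum_smul_mem_lowerHull {ι : Type*} [Fintype ι] [Nonempty ι] {S : Set E} {z : ι → E}
    (hz : ∀ i, z i ∈ lowerHull 𝕜 S) {c : ι → 𝕜} (hc : ∀ i, 0 ≤ c i) (hc1 : ∑ i, c i ≤ 1) :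
    ∑ i, c i • z i ∈ lowerHull 𝕜 S := by
  classical
  obtain ⟨j⟩ := ‹Nonempty ι›
  have hslack : 0 ≤ 1 - ∑ i, c i := sub_nonneg.2 hc1
  have hmem : ∑ i, (c + Pi.single j (1 - ∑ i, c i) : ι → 𝕜) i • z i ∈ lowerHull 𝕜 S :=
    (convex_lowerHull S).sum_mem
      (fun i _ => add_nonneg (hc i) ((Pi.single_nonneg.2 hslack : (0 : ι → 𝕜) ≤ _) i))
      (by simp [Finset.sum_add_distrib]) fun i _ => hz i
  refine mem_lowerHull_of_le (Finset.sum_nonneg fun i _ => smul_nonneg (hc i) (hz i).1) ?_ hmem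
  simpa [add_smul, Finset.sum_add_distrib, Pi.single_apply, ite_smul] using
    smul_nonneg hslack (hz j).1

theorem smul_add_smul_mem_lowerHull {S : Set E} {x y : E} (hx : x ∈ lowerHull 𝕜 S)
    (hy : y ∈ lowerHull 𝕜 S) {a c : 𝕜} (ha : 0 ≤ a) (hc : 0 ≤ c) (hac : a + c ≤ 1) :
    a • x + c • y ∈ lowerHull 𝕜 S := by
  simpa using sum_smul_mem_lowerHull (z := ![x, y]) (by simp [Fin.forall_fin_two, hx, hy])
    (c := ![a, c]) (by simp [Fin.forall_fin_two, ha, hc]) (by simpa using hac)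

theorem mem_lowerHull_of_le_smul_add_smul {S : Set E} {w x y : E} (hw : 0 ≤ w)
    (hx : x ∈ lowerHull 𝕜 S) (hy : y ∈ lowerHull 𝕜 S) {a c : 𝕜} (ha : 0 ≤ a) (hc : 0 ≤ c)
    (hac : a + c ≤ 1) (hle : w ≤ a • x + c • y) : w ∈ lowerHull 𝕜 S :=
  mem_lowerHull_of_le hw hle (smul_add_smul_mem_lowerHull hx hy ha hc hac)

end OrderedField

section Corners

variable {𝕜 ι : Type*} [Field 𝕜]

/-- The vectors obtained from members of `S` by replacing some coordinates by `0`. They turn the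
lower hull of `S` into an ordinary convex hull. -/
def corners (S : Set (ι → 𝕜)) : Set (ι → 𝕜) := ⋃ s ∈ S, Set.univ.pi fun i => {0, s i}

theorem mem_corners {S : Set (ι → 𝕜)} {x : ι → 𝕜} :
    x ∈ corners S ↔ ∃ s ∈ S, ∀ i, x i = 0 ∨ x i = s i := by
  simp [corners, Set.mem_pi]

theorem finite_corners [Finite ι] {S : Set (ι → 𝕜)} (hS : S.Finite) : (corners S).Finite :=
  hS.biUnion fun s _ => Set.Finite.pi fun i => Set.toFinite {0, s i}

variable [LinearOrder 𝕜] {S : Set (ι → 𝕜)}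

theorem corners_subset_lowerHull (hS : S ⊆ Set.Ici 0) : corners S ⊆ lowerHull 𝕜 S := by
  intro x hx
  obtain ⟨s, hs, hx⟩ := mem_corners.1 hx
  have hs0 (i : ι) : 0 ≤ s i := hS hs i
  exact mem_lowerHull_of_le (fun i => by rcases hx i with h | h <;> simp [h, hs0])
    (fun i => by rcases hx i with h | h <;> simp [h, hs0]) (subset_lowerHull hS hs)

variable [IsStrictOrderedRing 𝕜] [Finite ι]

theorem Icc_subset_convexHull_corners {s : ι → 𝕜} (hs : s ∈ S) (hs0 : 0 ≤ s) :
    Set.Icc 0 s ⊆ convexHull 𝕜 (corners S) := by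
  have hbox : convexHull 𝕜 (Set.univ.pi fun i => {0, s i}) = Set.Icc 0 s := by
    rw [convexHull_pi, ← Set.pi_univ_Icc]
    exact congrArg _ (funext fun i => (convexHull_pair 0 (s i)).trans (segment_eq_Icc (hs0 i)))
  rw [← hbox]
  exact convexHull_mono fun x hx => Set.mem_biUnion hs hx

theorem mul_mem_convexHull_corners (hS : S ⊆ Set.Ici 0) {θ x : ι → 𝕜} (hθ : θ ∈ Set.Icc 0 1)
    (hx : x ∈ convexHull 𝕜 (corners S)) : θ * x ∈ convexHull 𝕜 (corners S) := by
  refine convexHull_min (t := {x | θ * x ∈ convexHull 𝕜 (corners S)}) (fun x hx => ?_)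
    ((convex_convexHull 𝕜 _).linear_preimage (LinearMap.mulLeft 𝕜 θ)) hx
  obtain ⟨s, hs, hx⟩ := mem_corners.1 hx
  have hs0 (i : ι) : 0 ≤ s i := hS hs i
  refine Icc_subset_convexHull_corners hs hs0 ⟨fun i => ?_, fun i => ?_⟩
  · rcases hx i with h | h <;> simp [h, mul_nonneg (hθ.1 i) (hs0 i)]
  · rcases hx i with h | h <;> simp [h, hs0, mul_le_of_le_one_left (hs0 i) (hθ.2 i)]

theorem mem_convexHull_corners_of_le (hS : S ⊆ Set.Ici 0) {u v : ι → 𝕜} (hu : 0 ≤ u)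
    (huv : u ≤ v) (hv : v ∈ convexHull 𝕜 (corners S)) : u ∈ convexHull 𝕜 (corners S) := by
  have hratio : u / v * v = u := funext fun i => div_mul_cancel_of_imp fun h =>
    le_antisymm (h ▸ huv i) (hu i)
  have hv0 (i : ι) : 0 ≤ v i := (hu i).trans (huv i)
  rw [← hratio]
  exact mul_mem_convexHull_corners hS
    ⟨fun i => div_nonneg (hu i) (hv0 i), fun i => div_le_one_of_le₀ (huv i) (hv0 i)⟩ hv

theorem convexHull_corners (hS : S ⊆ Set.Ici 0) :
    convexHull 𝕜 (corners S) = lowerHull 𝕜 S :=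
  (convexHull_min (corners_subset_lowerHull hS) (convex_lowerHull S)).antisymm <|
    lowerHull_min (fun _ hs => Icc_subset_convexHull_corners hs (hS hs) ⟨hS hs, le_rfl⟩)
      (convex_convexHull 𝕜 _) fun _ _ => mem_convexHull_corners_of_le hS

end Corners

section Polytope

theorem vec_four_eq_iff {R : Type*} {x y : Fin 4 → R} :
    x = y ↔ x 0 = y 0 ∧ x 1 = y 1 ∧ x 2 = y 2 ∧ x 3 = y 3 := by
  simp [funext_iff, Fin.forall_fin_succ]

theorem vec_four_le_iff {R : Type*} [LE R] {x y : Fin 4 → R} :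
    x ≤ y ↔ x 0 ≤ y 0 ∧ x 1 ≤ y 1 ∧ x 2 ≤ y 2 ∧ x 3 ≤ y 3 := by
  simp [Pi.le_def, Fin.forall_fin_succ]

/-- The recursion for state vectors of rooted trees, as a bilinear map: `graft u v` is the state
vector of the tree obtained by joining the root of a tree with state `u` to the root of a tree with
state `v`, and keeping the first root. -/
def graft : (Fin 4 → ℝ) →ₗ[ℝ] (Fin 4 → ℝ) →ₗ[ℝ] (Fin 4 → ℝ) :=
  LinearMap.mk₂ ℝ
    (fun u v => ![u 0 * v 0 + u 0 * v 1, u 0 * v 2 + u 1 * v 0 + u 1 * v 1,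
      u 2 * v 0 + u 3 * v 3, u 3 * v 0])
    (fun u u' v => by ext i; fin_cases i <;> simp <;> ring)
    (fun c u v => by ext i; fin_cases i <;> simp <;> ring)
    (fun u v v' => by ext i; fin_cases i <;> simp <;> ring)
    (fun c u v => by ext i; fin_cases i <;> simp <;> ring)

theorem graft_apply (u v : Fin 4 → ℝ) :
    graft u v = ![u 0 * v 0 + u 0 * v 1, u 0 * v 2 + u 1 * v 0 + u 1 * v 1,
      u 2 * v 0 + u 3 * v 3, u 3 * v 0] :=
  rfl

theorem graft_nonneg ⦃u v : Fin 4 → ℝ⦄ (hu : 0 ≤ u) (hv : 0 ≤ v) : 0 ≤ graft u v := by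
  have hmul (i j : Fin 4) : 0 ≤ u i * v j := mul_nonneg (hu i) (hv j)
  simp [Pi.le_def, Fin.forall_fin_succ, graft_apply, hmul, add_nonneg]

/-- The state vector of the path on `n + 1` vertices rooted at an end, scaled by `b ^ (n + 1)`. -/
def endPath (b : ℝ) : ℕ → Fin 4 → ℝ
  | 0 => b • ![1, 0, 0, 1]
  | n + 1 => graft (b • ![1, 0, 0, 1]) (endPath b n)

/-- Generators, up to passing to the lower hull, of an invariant polytope for `graft` when
`b + b ^ 4 = 1`. The two axis vectors absorb the excess of `graft (endPath b i) v` over a multiple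
of a vector already in the hull; the entry `1 + b ^ 3` is what makes `endPath b 0` carry the second
axis vector to the first. -/
def generators (b : ℝ) : Set (Fin 4 → ℝ) :=
  {endPath b 0, endPath b 1, endPath b 2, endPath b 3, ![0, 1, 0, 0], ![0, 0, 1 + b ^ 3, 0]}

variable {b : ℝ}

theorem endPath_succ (b : ℝ) (n : ℕ) :
    endPath b (n + 1) = graft (endPath b 0) (endPath b n) :=
  rfl

theorem endPath_zero (b : ℝ) : endPath b 0 = ![b, 0, 0, b] := by
  simp [endPath]

theorem endPath_one (b : ℝ) : endPath b 1 = ![b ^ 2, 0, b ^ 2, b ^ 2] := by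
  simp [endPath_succ, endPath_zero, graft_apply, sq]

theorem endPath_two (b : ℝ) : endPath b 2 = ![b ^ 3, b ^ 3, b ^ 3, b ^ 3] := by
  rw [endPath_succ, endPath_zero, endPath_one]
  simp [graft_apply, ← pow_succ']

theorem endPath_three (b : ℝ) : endPath b 3 = ![2 * b ^ 4, b ^ 4, b ^ 4, b ^ 4] := by
  rw [endPath_succ, endPath_zero, endPath_two]
  simp [graft_apply, ← pow_succ', two_mul]

theorem forall_mem_generators {p : (Fin 4 → ℝ) → Prop} :
    (∀ v ∈ generators b, p v) ↔ p ![b, 0, 0, b] ∧ p ![b ^ 2, 0, b ^ 2, b ^ 2] ∧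
      p ![b ^ 3, b ^ 3, b ^ 3, b ^ 3] ∧ p ![2 * b ^ 4, b ^ 4, b ^ 4, b ^ 4] ∧
      p ![0, 1, 0, 0] ∧ p ![0, 0, 1 + b ^ 3, 0] := by
  simp [generators, endPath_zero, endPath_one, endPath_two, endPath_three]

theorem generators_nonneg (hb : 0 ≤ b) : generators b ⊆ Set.Ici 0 := by
  refine forall_mem_generators.2 ?_
  simp [Pi.le_def, Fin.forall_fin_succ, hb, add_nonneg]

-- The root is `0.7244…`, so the bound is tight to three digits.
theorem le_of_add_pow_four_eq_one (hroot : b + b ^ 4 = 1) : b ≤ 29 / 40 := by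
  by_contra! hlt
  linarith [pow_lt_pow_left₀ hlt (by norm_num) (show 4 ≠ 0 by norm_num)]

theorem graft_endPath_one (hroot : b + b ^ 4 = 1) (v : Fin 4 → ℝ) :
    graft (endPath b 1) v =
      b • graft (endPath b 0) v + (b ^ 3 * v 0) • ![0, 0, 1 + b ^ 3, 0] := by
  simp only [vec_four_eq_iff, graft_apply, endPath_zero, endPath_one, Pi.add_apply,
    Pi.smul_apply, smul_eq_mul, Matrix.cons_val]
  exact ⟨by ring, by ring, by linear_combination -b ^ 2 * v 0 * hroot, by ring⟩

theorem graft_endPath_two (hroot : b + b ^ 4 = 1) (v : Fin 4 → ℝ) :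
    graft (endPath b 2) v = b ^ 2 • graft (endPath b 0) v +
      (b ^ 4 * v 0) • ![0, 0, 1 + b ^ 3, 0] + (b ^ 3 * (v 0 + v 1)) • ![0, 1, 0, 0] := by
  simp only [vec_four_eq_iff, graft_apply, endPath_zero, endPath_two, Pi.add_apply,
    Pi.smul_apply, smul_eq_mul, Matrix.cons_val]
  exact ⟨by ring, by ring, by linear_combination -b ^ 3 * v 0 * hroot, by ring⟩

theorem endPath_four (b : ℝ) : endPath b 4 = b • endPath b 3 + b ^ 4 • endPath b 0 := by
  simp only [endPath_succ b 3, vec_four_eq_iff, graft_apply, endPath_zero, endPath_three,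
    Pi.add_apply, Pi.smul_apply, smul_eq_mul, Matrix.cons_val]
  exact ⟨by ring, by ring, by ring, by ring⟩

theorem endPath_mem_lowerHull (hb : 0 ≤ b) {n : ℕ} (hn : n < 4) :
    endPath b n ∈ lowerHull ℝ (generators b) := by
  refine subset_lowerHull (generators_nonneg hb) ?_
  interval_cases n <;> simp [generators]

theorem secondAxis_mem_lowerHull (hb : 0 ≤ b) : ![0, 1, 0, 0] ∈ lowerHull ℝ (generators b) :=
  subset_lowerHull (generators_nonneg hb) (by simp [generators])

theorem thirdAxis_mem_lowerHull (hb : 0 ≤ b) : ![0, 0, 1 + b ^ 3, 0] ∈ lowerHull ℝ (generators b) :=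
  subset_lowerHull (generators_nonneg hb) (by simp [generators])

theorem graft_endPath_zero_mem_lowerHull (hb : 0 ≤ b) (hroot : b + b ^ 4 = 1) :
    ∀ v ∈ generators b, graft (endPath b 0) v ∈ lowerHull ℝ (generators b) := by
  have htight : endPath b 4 ∈ lowerHull ℝ (generators b) := by
    rw [endPath_four]
    exact smul_add_smul_mem_lowerHull (endPath_mem_lowerHull hb (by norm_num))
      (endPath_mem_lowerHull hb (by norm_num)) hb (pow_nonneg hb 4) hroot.le
  have hone : graft (endPath b 0) ![0, 1, 0, 0] ∈ lowerHull ℝ (generators b) := by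
    refine mem_lowerHull_of_le ?_ ?_ (endPath_mem_lowerHull hb (n := 0) (by norm_num)) <;>
      simp [Pi.le_def, Fin.forall_fin_succ, endPath_zero, graft_apply, hb]
  have htwo : graft (endPath b 0) ![0, 0, 1 + b ^ 3, 0] = ![0, 1, 0, 0] := by
    simp only [vec_four_eq_iff, graft_apply, endPath_zero, Matrix.cons_val]
    exact ⟨by ring, by linear_combination hroot, by ring, by ring⟩
  rintro v (rfl | rfl | rfl | rfl | rfl | rfl)
  · exact endPath_mem_lowerHull hb (n := 1) (by norm_num)
  · exact endPath_mem_lowerHull hb (n := 2) (by norm_num)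
  · exact endPath_mem_lowerHull hb (n := 3) (by norm_num)
  · exact htight
  · exact hone
  · exact htwo ▸ secondAxis_mem_lowerHull hb

theorem graft_secondAxis (c : ℝ) (v : Fin 4 → ℝ) :
    graft ![0, c, 0, 0] v = (v 0 + v 1) • ![0, c, 0, 0] := by
  simp [graft_apply, mul_add, mul_comm]

theorem graft_thirdAxis (c : ℝ) (v : Fin 4 → ℝ) :
    graft ![0, 0, c, 0] v = v 0 • ![0, 0, c, 0] := by
  simp [graft_apply, mul_comm]

theorem apply_zero_le_of_mem_generators (hb : 0 ≤ b) (hb' : b ≤ 29 / 40) :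
    ∀ v ∈ generators b, v 0 ≤ b := by
  have h2 : b * b ≤ b * 1 := by gcongr; linarith
  have h3 : b * b ^ 2 ≤ b * 1 := by gcongr; linarith [pow_le_pow_left₀ hb hb' 2]
  have h4 : b * (2 * b ^ 3) ≤ b * 1 := by gcongr; linarith [pow_le_pow_left₀ hb hb' 3]
  refine forall_mem_generators.2 ?_
  simp only [Matrix.cons_val]
  exact ⟨le_rfl, by linarith, by linarith, by linarith, hb, hb⟩

theorem apply_zero_add_apply_one_le_of_mem_generators (hb : 0 ≤ b) (hb' : b ≤ 29 / 40) :
    ∀ v ∈ generators b, v 0 + v 1 ≤ 1 := by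
  have hpow (n : ℕ) : b ^ n ≤ (29 / 40) ^ n := pow_le_pow_left₀ hb hb' n
  refine forall_mem_generators.2 ?_
  simp only [Matrix.cons_val]
  exact ⟨by linarith, by linarith [hpow 2], by linarith [hpow 3], by linarith [hpow 4],
    by norm_num, by norm_num⟩

theorem graft_endPath_one_mem_lowerHull (hb : 0 ≤ b) (hroot : b + b ^ 4 = 1) :
    ∀ v ∈ generators b, graft (endPath b 1) v ∈ lowerHull ℝ (generators b) := by
  intro v hv
  have hv0 : b ^ 3 * v 0 ≤ b ^ 3 * b := by
    gcongr
    exact apply_zero_le_of_mem_generators hb (le_of_add_pow_four_eq_one hroot) v hv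
  rw [graft_endPath_one hroot]
  exact smul_add_smul_mem_lowerHull (graft_endPath_zero_mem_lowerHull hb hroot v hv)
    (thirdAxis_mem_lowerHull hb) hb (mul_nonneg (pow_nonneg hb 3) (generators_nonneg hb hv 0))
    (by linarith)

theorem sum_endPath_two_weights_le (hb : 0 ≤ b) (hroot : b + b ^ 4 = 1) :
    ∀ v ∈ generators b, b ^ 2 + b ^ 4 * v 0 + b ^ 3 * (v 0 + v 1) ≤ 1 := by
  have hpow (n : ℕ) : b ^ n ≤ (29 / 40) ^ n :=
    pow_le_pow_left₀ hb (le_of_add_pow_four_eq_one hroot) n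
  refine forall_mem_generators.2 ?_
  simp only [Matrix.cons_val]
  exact ⟨by linear_combination (1 + b) * hroot, by linarith [hpow 2, hpow 5, hpow 6],
    by linarith [hpow 2, hpow 6, hpow 7], by linarith [hpow 2, hpow 7, hpow 8],
    by linarith [hpow 2, hpow 3], by linarith [hpow 2]⟩

theorem graft_endPath_two_mem_lowerHull (hb : 0 ≤ b) (hroot : b + b ^ 4 = 1) :
    ∀ v ∈ generators b, graft (endPath b 2) v ∈ lowerHull ℝ (generators b) := by
  intro v hv
  have hv0 (i : Fin 4) : 0 ≤ v i := generators_nonneg hb hv i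
  have hmem := graft_endPath_zero_mem_lowerHull hb hroot v hv
  rw [graft_endPath_two hroot]
  simpa [Fin.sum_univ_succ, add_assoc] using sum_smul_mem_lowerHull (S := generators b)
    (z := ![graft (endPath b 0) v, ![0, 0, 1 + b ^ 3, 0], ![0, 1, 0, 0]])
    (c := ![b ^ 2, b ^ 4 * v 0, b ^ 3 * (v 0 + v 1)])
    (by simp [Fin.forall_fin_succ, hmem, secondAxis_mem_lowerHull hb, thirdAxis_mem_lowerHull hb])
    (by simp [Fin.forall_fin_succ, hb, hv0, add_nonneg, mul_nonneg])
    (by simpa [Fin.sum_univ_succ, add_assoc] using sum_endPath_two_weights_le hb hroot v hv)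

theorem graft_endPath_three_thirdAxis (hroot : b + b ^ 4 = 1) :
    graft (endPath b 3) ![0, 0, 1 + b ^ 3, 0] = (2 * b ^ 3) • ![0, 1, 0, 0] := by
  simp only [vec_four_eq_iff, graft_apply, endPath_three, Pi.smul_apply, smul_eq_mul,
    Matrix.cons_val]
  exact ⟨by ring, by linear_combination 2 * b ^ 3 * hroot, by ring, by ring⟩

theorem graft_endPath_three_zero_le (hb : 0 ≤ b) (hroot : b + b ^ 4 = 1) :
    graft (endPath b 3) (endPath b 0) ≤ b • endPath b 3 + b ^ 6 • ![0, 0, 1 + b ^ 3, 0] := by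
  have hpos (n : ℕ) : 0 ≤ b ^ n := pow_nonneg hb n
  simp only [vec_four_le_iff, graft_apply, endPath_zero, endPath_three, Pi.add_apply,
    Pi.smul_apply, smul_eq_mul, Matrix.cons_val]
  exact ⟨by linarith, by linarith, by linear_combination -b ^ 5 * hroot, by linarith [hpos 5]⟩

theorem graft_endPath_three_one_le (hb : 0 ≤ b) :
    graft (endPath b 3) (endPath b 1) ≤
      (2 * b ^ 3) • endPath b 2 + b ^ 6 • ![0, 1, 0, 0] := by
  have hpos : 0 ≤ b ^ 6 := pow_nonneg hb 6
  simp only [vec_four_le_iff, graft_apply, endPath_one, endPath_two, endPath_three,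
    Pi.add_apply, Pi.smul_apply, smul_eq_mul, Matrix.cons_val]
  exact ⟨by linarith, by linarith, by linarith, by linarith⟩

theorem graft_endPath_three_two_le (hb : 0 ≤ b) :
    graft (endPath b 3) (endPath b 2) ≤
      (2 * b ^ 3) • endPath b 3 + (2 * b ^ 7) • ![0, 1, 0, 0] := by
  have hpos : 0 ≤ b ^ 7 := pow_nonneg hb 7
  simp only [vec_four_le_iff, graft_apply, endPath_two, endPath_three,
    Pi.add_apply, Pi.smul_apply, smul_eq_mul, Matrix.cons_val]
  exact ⟨by linarith, by linarith, by linarith, by linarith⟩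

theorem graft_endPath_three_three_le (hb : 0 ≤ b) :
    graft (endPath b 3) (endPath b 3) ≤
      (3 * b ^ 4) • endPath b 3 + (2 * b ^ 8) • ![0, 1, 0, 0] := by
  have hpos : 0 ≤ b ^ 8 := pow_nonneg hb 8
  simp only [vec_four_le_iff, graft_apply, endPath_three,
    Pi.add_apply, Pi.smul_apply, smul_eq_mul, Matrix.cons_val]
  exact ⟨by linarith, by linarith, by linarith, by linarith⟩

theorem graft_endPath_three_secondAxis_le (hb : 0 ≤ b) :
    graft (endPath b 3) ![0, 1, 0, 0] ≤ endPath b 3 := by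
  simp [vec_four_le_iff, graft_apply, endPath_three, hb]

theorem graft_endPath_three_mem_lowerHull (hb : 0 ≤ b) (hroot : b + b ^ 4 = 1) :
    ∀ v ∈ generators b, graft (endPath b 3) v ∈ lowerHull ℝ (generators b) := by
  intro v hv
  have hpow (n : ℕ) : b ^ n ≤ (29 / 40) ^ n :=
    pow_le_pow_left₀ hb (le_of_add_pow_four_eq_one hroot) n
  have hnonneg : 0 ≤ graft (endPath b 3) v :=
    graft_nonneg (endPath_mem_lowerHull hb (by norm_num)).1 (generators_nonneg hb hv)
  have htwo : endPath b 2 ∈ lowerHull ℝ (generators b) := endPath_mem_lowerHull hb (by norm_num)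
  have hthree : endPath b 3 ∈ lowerHull ℝ (generators b) := endPath_mem_lowerHull hb (by norm_num)
  rcases hv with rfl | rfl | rfl | rfl | rfl | rfl
  · exact mem_lowerHull_of_le_smul_add_smul hnonneg hthree (thirdAxis_mem_lowerHull hb) hb
      (by positivity) (by linarith [hpow 1, hpow 6]) (graft_endPath_three_zero_le hb hroot)
  · exact mem_lowerHull_of_le_smul_add_smul hnonneg htwo (secondAxis_mem_lowerHull hb)
      (by positivity) (by positivity) (by linarith [hpow 3, hpow 6]) (graft_endPath_three_one_le hb)
  · exact mem_lowerHull_of_le_smul_add_smul hnonneg hthree (secondAxis_mem_lowerHull hb)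
      (by positivity) (by positivity) (by linarith [hpow 3, hpow 7]) (graft_endPath_three_two_le hb)
  · exact mem_lowerHull_of_le_smul_add_smul hnonneg hthree (secondAxis_mem_lowerHull hb)
      (by positivity) (by positivity) (by linarith [hpow 4, hpow 8])
      (graft_endPath_three_three_le hb)
  · exact mem_lowerHull_of_le hnonneg (graft_endPath_three_secondAxis_le hb) hthree
  · rw [graft_endPath_three_thirdAxis hroot]
    exact smul_mem_lowerHull (secondAxis_mem_lowerHull hb) (by positivity) (by linarith [hpow 3])

theorem graft_mem_lowerHull (hb : 0 ≤ b) (hroot : b + b ^ 4 = 1) :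
    ∀ u ∈ generators b, ∀ v ∈ generators b, graft u v ∈ lowerHull ℝ (generators b) := by
  have hb' := le_of_add_pow_four_eq_one hroot
  rintro u (rfl | rfl | rfl | rfl | rfl | rfl) v hv
  · exact graft_endPath_zero_mem_lowerHull hb hroot v hv
  · exact graft_endPath_one_mem_lowerHull hb hroot v hv
  · exact graft_endPath_two_mem_lowerHull hb hroot v hv
  · exact graft_endPath_three_mem_lowerHull hb hroot v hv
  · rw [graft_secondAxis]
    exact smul_mem_lowerHull (secondAxis_mem_lowerHull hb)
      (add_nonneg (generators_nonneg hb hv 0) (generators_nonneg hb hv 1))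
      (apply_zero_add_apply_one_le_of_mem_generators hb hb' v hv)
  · rw [graft_thirdAxis]
    exact smul_mem_lowerHull (thirdAxis_mem_lowerHull hb) (generators_nonneg hb hv 0)
      ((apply_zero_le_of_mem_generators hb hb' v hv).trans (by linarith))

theorem sum_apply_le_two_of_mem_lowerHull (hb : 0 ≤ b) (hroot : b + b ^ 4 = 1) :
    ∀ v ∈ lowerHull ℝ (generators b), v 0 + v 1 + v 2 ≤ 2 := by
  have hpow (n : ℕ) : b ^ n ≤ (29 / 40) ^ n :=
    pow_le_pow_left₀ hb (le_of_add_pow_four_eq_one hroot) n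
  refine lowerHull_min (T := {v : Fin 4 → ℝ | v 0 + v 1 + v 2 ≤ 2}) ?_ ?_ ?_
  · refine forall_mem_generators.2 ?_
    simp only [Set.mem_ofPred_eq, Matrix.cons_val]
    exact ⟨by linarith [hpow 1], by linarith [hpow 2], by linarith [hpow 3], by linarith [hpow 4],
      by norm_num, by linarith [hpow 3]⟩
  · exact convex_halfSpace_le
      ⟨fun x y => by simp only [Pi.add_apply]; ring,
        fun c x => by simp only [Pi.smul_apply, smul_eq_mul]; ring⟩ 2
  · intro w v _ hwv hv
    exact (add_le_add_three (hwv 0) (hwv 1) (hwv 2)).trans hv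

end Polytope

section Matchings

variable {V : Type*} {G G' : SimpleGraph V} {d k : ℕ} {r s t x y : V} {e f : Sym2 V}
  {M : Set (Sym2 V)}

theorem edgeDist_le_dist (hx : x ∈ e) (hy : y ∈ f) : edgeDist G e f ≤ G.dist x y :=
  Nat.sInf_le ⟨x, hx, y, hy, rfl⟩

theorem le_edgeDist (h : ∀ x ∈ e, ∀ y ∈ f, k ≤ G.dist x y) : k ≤ edgeDist G e f := by
  refine le_csInf ⟨_, _, e.out_fst_mem, _, f.out_fst_mem, rfl⟩ ?_
  rintro _ ⟨x, hx, y, hy, rfl⟩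
  exact h x hx y hy

theorem IsRMatching.le_dist (hM : IsRMatching G d M) (he : e ∈ M) (hf : f ∈ M) (hef : e ≠ f)
    (hx : x ∈ e) (hy : y ∈ f) : d ≤ G.dist x y :=
  (hM.2 e he f hf hef).trans (edgeDist_le_dist hx hy)

/-- The `d`-matchings of the component of `r` whose covered vertices all have distance at least
`k` from `r`. Reachability is part of the condition since `SimpleGraph.dist` is `0` between
different components. -/
def farMatchings (G : SimpleGraph V) (d : ℕ) (r : V) (k : ℕ) : Set (Set (Sym2 V)) :=
  {M | IsRMatching G d M ∧ ∀ e ∈ M, ∀ x ∈ e, G.Reachable r x ∧ k ≤ G.dist r x}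

theorem farMatchings_anti (G : SimpleGraph V) (d : ℕ) (r : V) : Antitone (farMatchings G d r) :=
  fun _ _ hjk _ ⟨hM, hfar⟩ => ⟨hM, fun e he x hx => (hfar e he x hx).imp_right hjk.trans⟩

theorem exists_dist_eq_of_mem_farMatchings_sdiff
    (hM : M ∈ farMatchings G d r k \ farMatchings G d r (k + 1)) :
    ∃ e ∈ M, ∃ x ∈ e, G.Reachable r x ∧ G.dist r x = k := by
  obtain ⟨⟨hMd, hfar⟩, hnear⟩ := hM
  by_contra! hne
  refine hnear ⟨hMd, fun e he x hx => ?_⟩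
  obtain ⟨hreach, hle⟩ := hfar e he x hx
  exact ⟨hreach, lt_of_le_of_ne hle (hne e he x hx hreach).symm⟩

theorem notMem_farMatchings (he : e ∈ M) (hx : x ∈ e) (hk : G.dist r x < k) :
    M ∉ farMatchings G d r k :=
  fun h => (h.2 e he x hx).2.not_gt hk

theorem mk_notMem_of_mem_farMatchings (hM : M ∈ farMatchings G d r (k + 1)) : s(r, s) ∉ M :=
  fun h => notMem_farMatchings h (Sym2.mem_mk_left r s) (by simp) hM

/-- The edges of `M` that lie in the component of `t` in `G`. -/
def branch (G : SimpleGraph V) (t : V) (M : Set (Sym2 V)) : Set (Sym2 V) :=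
  {e ∈ M | e ∈ G.edgeSet ∧ ∀ x ∈ e, G.Reachable t x}

theorem mem_branch_of_mem (he : e ∈ M) (heG : e ∈ G.edgeSet) (hx : x ∈ e) (htx : G.Reachable t x) :
    e ∈ branch G t M := by
  refine ⟨he, heG, fun z hz => ?_⟩
  obtain ⟨y, rfl⟩ := hx
  obtain rfl | rfl := Sym2.mem_iff.1 hz
  exacts [htx, htx.trans (G.mem_edgeSet.1 heG).reachable]

theorem notMem_branch_of_not_reachable (hx : x ∈ e) (htx : ¬ G.Reachable t x) : e ∉ branch G t M :=
  fun he => htx (he.2.2 x hx)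

theorem branch_mem_farMatchings (hle : G' ≤ G) (hM : IsRMatching G d M)
    (hk : ∀ e ∈ branch G' t M, ∀ x ∈ e, k ≤ G'.dist t x) :
    branch G' t M ∈ farMatchings G' d t k := by
  refine ⟨⟨fun e he => he.2.1, fun e he f hf hef => le_edgeDist fun x hx y hy => ?_⟩,
    fun e he x hx => ⟨he.2.2 x hx, hk e he x hx⟩⟩
  exact (hM.le_dist he.1 hf.1 hef hx hy).trans
    (((he.2.2 x hx).symm.trans (hf.2.2 y hy)).dist_anti hle)

theorem branch_mem_farMatchings_sub (hle : G' ≤ G) (hM : M ∈ farMatchings G d r k)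
    (hrt : G.Reachable r t) : branch G' t M ∈ farMatchings G' d t (k - G.dist r t) := by
  refine branch_mem_farMatchings hle hM.1 fun e he x hx => ?_
  have hrx : k ≤ G.dist r x := (hM.2 e he.1 x hx).2
  have htri : G.dist r x ≤ G.dist r t + G.dist t x := hrt.dist_triangle_left x
  have hanti : G.dist t x ≤ G'.dist t x := (he.2.2 x hx).dist_anti hle
  lia

theorem branch_mem_farMatchings_of_mem (hle : G' ≤ G) (hM : IsRMatching G d M) (hf : f ∈ M)
    (hf' : f ∉ branch G' t M) (hy : y ∈ f) (hty : G.Reachable t y) :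
    branch G' t M ∈ farMatchings G' d t (d - G.dist t y) := by
  refine branch_mem_farMatchings hle hM fun e he x hx => ?_
  have hfar : d ≤ G.dist y x := hM.le_dist hf he.1 (fun h => hf' (h ▸ he)) hy hx
  have htri : G.dist y x ≤ G.dist y t + G.dist t x := hty.symm.dist_triangle_left x
  have hanti : G.dist t x ≤ G'.dist t x := (he.2.2 x hx).dist_anti hle
  rw [G.dist_comm (u := y) (v := t)] at htri
  lia

theorem reachable_deleteEdges_or (hrx : G.Reachable r x) (s : V) :
    (G.deleteEdges {s(r, s)}).Reachable r x ∨ (G.deleteEdges {s(r, s)}).Reachable s x := by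
  obtain ⟨p⟩ := hrx.symm
  induction p with
  | nil => exact .inl .rfl
  | @cons u v w huv q ih =>
    by_cases huv' : s(u, v) = s(w, s)
    · obtain ⟨rfl, -⟩ | ⟨rfl, -⟩ := Sym2.eq_iff.1 huv'
      exacts [.inl .rfl, .inr .rfl]
    · have hvu : (G.deleteEdges {s(w, s)}).Reachable v u :=
        (SimpleGraph.deleteEdges_adj.2 ⟨huv, huv'⟩).symm.reachable
      exact (ih q.reachable.symm).imp (.trans · hvu) (.trans · hvu)

theorem reachable_iff_of_adj (hrs : G.Adj r s) :
    G.Reachable r x ↔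
      (G.deleteEdges {s(r, s)}).Reachable r x ∨ (G.deleteEdges {s(r, s)}).Reachable s x :=
  ⟨(reachable_deleteEdges_or · s), Or.rec (.mono (G.deleteEdges_le _))
    fun hsx => hrs.reachable.trans (hsx.mono (G.deleteEdges_le _))⟩

theorem ncard_reachable_eq_add [Finite V] (hrs : G.Adj r s) (hbridge : G.IsBridge s(r, s)) :
    {x | G.Reachable r x}.ncard = {x | (G.deleteEdges {s(r, s)}).Reachable r x}.ncard +
      {x | (G.deleteEdges {s(r, s)}).Reachable s x}.ncard := by
  rw [← Set.ncard_union_eq (Set.disjoint_left.2 fun x hr hs => hbridge (hr.trans hs.symm))]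
  exact congrArg Set.ncard (Set.ext fun x => reachable_iff_of_adj hrs)

/-- The parts of `M` in the components of `r` and `s` after deletion of the edge between them. -/
def branches (G : SimpleGraph V) (r s : V) (M : Set (Sym2 V)) : Set (Sym2 V) × Set (Sym2 V) :=
  (branch (G.deleteEdges {s(r, s)}) r M, branch (G.deleteEdges {s(r, s)}) s M)

theorem mem_edgeSet_deleteEdges (hM : IsRMatching G d M) (he : e ∈ M) (hne : e ≠ s(r, s)) :
    e ∈ (G.deleteEdges {s(r, s)}).edgeSet := by
  rw [SimpleGraph.edgeSet_deleteEdges]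
  exact ⟨hM.1 he, hne⟩

theorem branches_union (hM : M ∈ farMatchings G d r 0) (s : V) :
    (branches G r s M).1 ∪ (branches G r s M).2 = M \ {s(r, s)} := by
  ext e
  constructor
  · rintro (he | he) <;> exact ⟨he.1, (SimpleGraph.edgeSet_deleteEdges (G := G) _ ▸ he.2.1).2⟩
  · rintro ⟨he, hne⟩
    have heG := mem_edgeSet_deleteEdges hM.1 he hne
    have hx := e.out_fst_mem
    exact (reachable_deleteEdges_or (hM.2 e he _ hx).1 s).imp (mem_branch_of_mem he heG hx)
      (mem_branch_of_mem he heG hx)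

theorem injOn_branches {P : Set (Set (Sym2 V))} (hP : P ⊆ farMatchings G d r 0)
    (hiff : ∀ M ∈ P, ∀ N ∈ P, s(r, s) ∈ M ↔ s(r, s) ∈ N) : P.InjOn (branches G r s) := by
  intro M hM N hN hMN
  have hdiff : M \ {s(r, s)} = N \ {s(r, s)} := by
    rw [← branches_union (hP hM), ← branches_union (hP hN), hMN]
  ext e
  by_cases he : e = s(r, s)
  · exact he ▸ hiff M hM N hN
  · simpa [he] using Set.ext_iff.1 hdiff e

theorem branches_mem_prod_of_succ (hrs : G.Adj r s) (hM : M ∈ farMatchings G d r (k + 1)) :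
    branches G r s M ∈ farMatchings (G.deleteEdges {s(r, s)}) d r (k + 1) ×ˢ
      farMatchings (G.deleteEdges {s(r, s)}) d s k := by
  have hr := branch_mem_farMatchings_sub (G.deleteEdges_le {s(r, s)}) hM .rfl
  have hs := branch_mem_farMatchings_sub (G.deleteEdges_le {s(r, s)}) hM hrs.reachable
  rw [SimpleGraph.dist_self] at hr
  rw [SimpleGraph.dist_eq_one_iff_adj.2 hrs] at hs
  exact ⟨hr, hs⟩

theorem branches_mem_prod_of_mem (hM : IsRMatching G d M) (hrs : s(r, s) ∈ M) :
    branches G r s M ∈ farMatchings (G.deleteEdges {s(r, s)}) d r d ×ˢ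
      farMatchings (G.deleteEdges {s(r, s)}) d s d := by
  have hmem {t : V} (ht : t ∈ s(r, s)) : branch (G.deleteEdges {s(r, s)}) t M ∈
      farMatchings (G.deleteEdges {s(r, s)}) d t d := by
    have hnot : s(r, s) ∉ branch (G.deleteEdges {s(r, s)}) t M := fun h => by
      simpa [SimpleGraph.edgeSet_deleteEdges] using h.2.1
    simpa using branch_mem_farMatchings_of_mem (G.deleteEdges_le _) hM hrs hnot ht .rfl
  exact ⟨hmem (Sym2.mem_mk_left r s), hmem (Sym2.mem_mk_right r s)⟩

theorem branches_mem_prod_of_notMem (hrs : G.Adj r s) (hbridge : G.IsBridge s(r, s))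
    (hM : M ∈ farMatchings G d r 0 \ farMatchings G d r 1) (hnot : s(r, s) ∉ M) :
    branches G r s M ∈ (farMatchings (G.deleteEdges {s(r, s)}) d r 0 \
        farMatchings (G.deleteEdges {s(r, s)}) d r 1) ×ˢ
      farMatchings (G.deleteEdges {s(r, s)}) d s (d - 1) := by
  obtain ⟨e, he, y, hy, hry, hdist⟩ := exists_dist_eq_of_mem_farMatchings_sdiff hM
  obtain rfl : r = y := hry.dist_eq_zero_iff.1 hdist
  have heG : e ∈ (G.deleteEdges {s(r, s)}).edgeSet :=
    mem_edgeSet_deleteEdges hM.1.1 he fun h => hnot (h ▸ he)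
  have hr : branch (G.deleteEdges {s(r, s)}) r M ∉ farMatchings (G.deleteEdges {s(r, s)}) d r 1 :=
    notMem_farMatchings (mem_branch_of_mem he heG hy .rfl) hy (by simp)
  have hs := branch_mem_farMatchings_of_mem (G.deleteEdges_le {s(r, s)}) hM.1.1 he
    (notMem_branch_of_not_reachable hy fun h => hbridge h.symm) hy hrs.reachable.symm
  rw [SimpleGraph.dist_eq_one_iff_adj.2 hrs.symm] at hs
  exact ⟨⟨branch_mem_farMatchings (G.deleteEdges_le _) hM.1.1 fun _ _ _ _ => zero_le, hr⟩, hs⟩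

theorem branches_mem_prod_of_one (hrs : G.Adj r s) (hbridge : G.IsBridge s(r, s))
    (hM : M ∈ farMatchings G d r 1 \ farMatchings G d r 2) :
    branches G r s M ∈
      farMatchings (G.deleteEdges {s(r, s)}) d r (d - 1) ×ˢ
        (farMatchings (G.deleteEdges {s(r, s)}) d s 0 \
          farMatchings (G.deleteEdges {s(r, s)}) d s 1) ∪
      (farMatchings (G.deleteEdges {s(r, s)}) d r 1 \
          farMatchings (G.deleteEdges {s(r, s)}) d r 2) ×ˢ
        farMatchings (G.deleteEdges {s(r, s)}) d s (d - 2) := by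
  have hle := G.deleteEdges_le {s(r, s)}
  obtain ⟨e, he, y, hy, -, hdist⟩ := exists_dist_eq_of_mem_farMatchings_sdiff hM
  have hry : G.Adj r y := SimpleGraph.dist_eq_one_iff_adj.1 hdist
  have hne : e ≠ s(r, s) := fun h => mk_notMem_of_mem_farMatchings hM.1 (h ▸ he)
  have heG := mem_edgeSet_deleteEdges hM.1.1 he hne
  obtain ⟨hr, hs⟩ := branches_mem_prod_of_succ hrs hM.1
  obtain rfl | hys := eq_or_ne y s
  · have hr' := branch_mem_farMatchings_of_mem hle hM.1.1 he
      (notMem_branch_of_not_reachable hy hbridge) hy hry.reachable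
    rw [hdist] at hr'
    exact .inl ⟨hr', hs,
      notMem_farMatchings (mem_branch_of_mem he heG hy .rfl) hy (by simp)⟩
  · have hry' : (G.deleteEdges {s(r, s)}).Adj r y :=
      SimpleGraph.deleteEdges_adj.2 ⟨hry, by simp [hys, hrs.ne]⟩
    have hs' := branch_mem_farMatchings_of_mem hle hM.1.1 he
      (notMem_branch_of_not_reachable hy fun h => hbridge (hry'.reachable.trans h.symm)) hy
      (hrs.symm.reachable.trans hry.reachable)
    have hdist' : G.dist s y ≤ 2 := by
      have := hrs.symm.reachable.dist_triangle_left y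
      rwa [SimpleGraph.dist_eq_one_iff_adj.2 hrs.symm, hdist] at this
    refine .inr ⟨⟨hr, notMem_farMatchings (mem_branch_of_mem he heG hy hry'.reachable) hy ?_⟩,
      farMatchings_anti _ _ _ (Nat.sub_le_sub_left hdist' d) hs'⟩
    rw [SimpleGraph.dist_eq_one_iff_adj.2 hry']
    exact one_lt_two

theorem eq_of_reachable_of_forall_not_adj (hr : ∀ s, ¬ G.Adj r s) (hrx : G.Reachable r x) :
    x = r := by
  by_contra hne
  exact SimpleGraph.not_reachable_of_neighborSet_left_eq_empty (Ne.symm hne)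
    (Set.eq_empty_iff_forall_notMem.2 hr) hrx

theorem farMatchings_of_forall_not_adj (hr : ∀ s, ¬ G.Adj r s) : farMatchings G d r k = {∅} := by
  refine Set.Subset.antisymm (fun M hM => Set.eq_empty_iff_forall_notMem.2 fun e he => ?_) ?_
  · obtain ⟨x, y⟩ := e
    obtain rfl := eq_of_reachable_of_forall_not_adj hr (hM.2 _ he x (Sym2.mem_mk_left x y)).1
    exact hr y (hM.1.1 he)
  · rintro _ rfl
    simp [farMatchings, IsRMatching]

theorem farMatchings_zero_of_connected (hG : G.Connected) (d : ℕ) (r : V) :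
    farMatchings G d r 0 = {M | IsRMatching G d M} :=
  Set.ext fun _ => and_iff_left fun _ _ x _ => ⟨hG.preconnected r x, zero_le⟩

variable [Finite V]

theorem ncard_farMatchings_succ_le (hrs : G.Adj r s) (d k : ℕ) :
    (farMatchings G d r (k + 1)).ncard ≤
      (farMatchings (G.deleteEdges {s(r, s)}) d r (k + 1)).ncard *
        (farMatchings (G.deleteEdges {s(r, s)}) d s k).ncard := by
  rw [← Set.ncard_prod]
  exact Set.ncard_le_ncard_of_injOn _ (fun M => branches_mem_prod_of_succ hrs)
    (injOn_branches (farMatchings_anti G d r (Nat.zero_le _)) fun M hM N hN =>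
      iff_of_false (mk_notMem_of_mem_farMatchings hM) (mk_notMem_of_mem_farMatchings hN))

theorem ncard_farMatchings_one_sdiff_le (hrs : G.Adj r s) (hbridge : G.IsBridge s(r, s)) (d : ℕ) :
    (farMatchings G d r 1 \ farMatchings G d r 2).ncard ≤
      (farMatchings (G.deleteEdges {s(r, s)}) d r (d - 1)).ncard *
        (farMatchings (G.deleteEdges {s(r, s)}) d s 0 \
          farMatchings (G.deleteEdges {s(r, s)}) d s 1).ncard +
      (farMatchings (G.deleteEdges {s(r, s)}) d r 1 \
          farMatchings (G.deleteEdges {s(r, s)}) d r 2).ncard *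
        (farMatchings (G.deleteEdges {s(r, s)}) d s (d - 2)).ncard := by
  rw [← Set.ncard_prod, ← Set.ncard_prod]
  refine le_trans ?_ (Set.ncard_union_le _ _)
  exact Set.ncard_le_ncard_of_injOn _ (fun M => branches_mem_prod_of_one hrs hbridge)
    (injOn_branches (Set.sdiff_subset.trans (farMatchings_anti G d r (Nat.zero_le _)))
      fun M hM N hN => iff_of_false (mk_notMem_of_mem_farMatchings hM.1)
        (mk_notMem_of_mem_farMatchings hN.1))

theorem ncard_farMatchings_zero_sdiff_le (hrs : G.Adj r s) (hbridge : G.IsBridge s(r, s)) (d : ℕ) :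
    (farMatchings G d r 0 \ farMatchings G d r 1).ncard ≤
      (farMatchings (G.deleteEdges {s(r, s)}) d r 0 \
          farMatchings (G.deleteEdges {s(r, s)}) d r 1).ncard *
        (farMatchings (G.deleteEdges {s(r, s)}) d s (d - 1)).ncard +
      (farMatchings (G.deleteEdges {s(r, s)}) d r d).ncard *
        (farMatchings (G.deleteEdges {s(r, s)}) d s d).ncard := by
  rw [← Set.ncard_prod, ← Set.ncard_prod,
    ← Set.ncard_inter_add_ncard_sdiff_eq_ncard _ {M | s(r, s) ∈ M}, add_comm]
  refine add_le_add ?_ ?_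
  · exact Set.ncard_le_ncard_of_injOn _
      (fun M hM => branches_mem_prod_of_notMem hrs hbridge hM.1 hM.2)
      (injOn_branches (fun M hM => hM.1.1) fun M hM N hN => iff_of_false hM.2 hN.2)
  · exact Set.ncard_le_ncard_of_injOn _ (fun M hM => branches_mem_prod_of_mem hM.1.1.1 hM.2)
      (injOn_branches (fun M hM => hM.1.1) fun M hM N hN => iff_of_true hM.2 hN.2)

end Matchings

section TreeState

variable {V : Type*} {G : SimpleGraph V} {r s : V}

/-- The numbers of `3`-matchings of the component of `r` for which the distance from `r` to the
nearest covered vertex is, respectively, at least `2`, exactly `1`, exactly `0`, and at least `3`.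
The empty matching counts as having no covered vertex at any distance. -/
noncomputable def stateVec (G : SimpleGraph V) (r : V) : Fin 4 → ℝ :=
  ![(farMatchings G 3 r 2).ncard, (farMatchings G 3 r 1 \ farMatchings G 3 r 2).ncard,
    (farMatchings G 3 r 0 \ farMatchings G 3 r 1).ncard, (farMatchings G 3 r 3).ncard]

theorem stateVec_nonneg (G : SimpleGraph V) (r : V) : 0 ≤ stateVec G r := by
  simp [stateVec, vec_four_le_iff]

theorem stateVec_of_forall_not_adj (hr : ∀ s, ¬ G.Adj r s) : stateVec G r = ![1, 0, 0, 1] := by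
  simp [stateVec, farMatchings_of_forall_not_adj hr]

variable [Finite V]

theorem ncard_farMatchings_one_eq (G : SimpleGraph V) (r : V) :
    ((farMatchings G 3 r 1).ncard : ℝ) = stateVec G r 0 + stateVec G r 1 := by
  have h := Set.ncard_sdiff_add_ncard_of_subset (farMatchings_anti G 3 r one_le_two)
  simp [stateVec, ← h, add_comm]

theorem ncard_farMatchings_zero_eq (G : SimpleGraph V) (r : V) :
    ((farMatchings G 3 r 0).ncard : ℝ) = stateVec G r 0 + stateVec G r 1 + stateVec G r 2 := by
  have h := Set.ncard_sdiff_add_ncard_of_subset (farMatchings_anti G 3 r zero_le_one)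
  rw [← ncard_farMatchings_one_eq, ← h]
  simp [stateVec, add_comm]

theorem stateVec_le_graft (hrs : G.Adj r s) (hbridge : G.IsBridge s(r, s)) :
    stateVec G r ≤ graft (stateVec (G.deleteEdges {s(r, s)}) r)
      (stateVec (G.deleteEdges {s(r, s)}) s) := by
  rw [vec_four_le_iff, graft_apply, Matrix.cons_val_zero, ← mul_add, add_assoc, ← mul_add,
    ← ncard_farMatchings_one_eq]
  simp only [stateVec, Matrix.cons_val]
  exact ⟨mod_cast ncard_farMatchings_succ_le hrs 3 1,
    mod_cast ncard_farMatchings_one_sdiff_le hrs hbridge 3,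
    mod_cast ncard_farMatchings_zero_sdiff_le hrs hbridge 3,
    mod_cast ncard_farMatchings_succ_le hrs 3 2⟩

theorem pow_ncard_smul_stateVec_mem {b : ℝ} (hb : 0 ≤ b) {K : Set (Fin 4 → ℝ)}
    (hlower : ∀ ⦃w v⦄, 0 ≤ w → w ≤ v → v ∈ K → w ∈ K) (hone : b • ![1, 0, 0, 1] ∈ K)
    (hgraft : ∀ u ∈ K, ∀ v ∈ K, graft u v ∈ K) (hG : G.IsAcyclic) (r : V) :
    b ^ {x | G.Reachable r x}.ncard • stateVec G r ∈ K := by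
  induction G using WellFoundedLT.induction generalizing r with
  | _ G ih =>
    by_cases hr : ∃ s, G.Adj r s
    · obtain ⟨s, hrs⟩ := hr
      have hbridge := SimpleGraph.isAcyclic_iff_forall_adj_isBridge.1 hG hrs
      have hlt : G.deleteEdges {s(r, s)} < G :=
        (G.deleteEdges_le _).lt_of_ne fun h => by simpa using h.ge hrs
      have hG' := hG.anti hlt.le
      refine hlower (smul_nonneg (by positivity) (stateVec_nonneg G r)) ?_
        (hgraft _ (ih _ hlt hG' r) _ (ih _ hlt hG' s))
      rw [map_smul, map_smul, LinearMap.smul_apply, smul_smul, mul_comm, ← pow_add,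
        ← ncard_reachable_eq_add hrs hbridge]
      gcongr
      exact stateVec_le_graft hrs hbridge
    · push Not at hr
      have hcomp : {x | G.Reachable r x} = {r} :=
        Set.ext fun x => ⟨eq_of_reachable_of_forall_not_adj hr, fun hx => hx ▸ .rfl⟩
      simpa [hcomp, stateVec_of_forall_not_adj hr] using hone

theorem nat_card_isRMatching_le {b : ℝ} (hb : 0 < b) (hroot : b + b ^ 4 = 1) (hG : G.Connected)
    (hG' : G.IsAcyclic) :
    (Nat.card {M // IsRMatching G 3 M} : ℝ) ≤ 2 * b⁻¹ ^ Nat.card V := by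
  obtain ⟨r⟩ := hG.nonempty
  have hmem : b ^ Nat.card V • stateVec G r ∈ lowerHull ℝ (generators b) := by
    have h := pow_ncard_smul_stateVec_mem hb.le (fun _ _ => mem_lowerHull_of_le)
      (endPath_mem_lowerHull hb.le (n := 0) (by norm_num))
      (fun u hu v hv => bilin_mem_lowerHull graft_nonneg (generators_nonneg hb.le)
        (graft_mem_lowerHull hb.le hroot) hu hv) hG' r
    simpa [hG.preconnected r _, Set.ncard_univ] using h
  have hsum := sum_apply_le_two_of_mem_lowerHull hb.le hroot _ hmem
  simp only [Pi.smul_apply, smul_eq_mul, ← mul_add, ← ncard_farMatchings_zero_eq,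
    farMatchings_zero_of_connected hG] at hsum
  rw [inv_pow, ← div_eq_mul_inv, le_div_iff₀' (by positivity)]
  exact hsum

end TreeState

theorem inv_add_inv_pow_four {α : ℝ} (hα : α ≠ 0) (hroot : α ^ 4 = α ^ 3 + 1) :
    α⁻¹ + α⁻¹ ^ 4 = 1 := by
  field_simp
  exact hroot.symm

theorem stmt_18 (α : ℝ) (hα : α ∈ Set.Ioo (1 : ℝ) 2) (hroot : α ^ 4 = α ^ 3 + 1) :
    let B : (Fin 4 → ℝ) → (Fin 4 → ℝ) → (Fin 4 → ℝ) := fun u v =>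
      ![u 0 * v 0 + u 0 * v 1, u 0 * v 2 + u 1 * v 0 + u 1 * v 1,
        u 2 * v 0 + u 3 * v 3, u 3 * v 0]
    let V₀ : Fin 4 → ℝ := ![1, 0, 0, 1]
    let F : Fin 4 → ℝ := ![1, 1, 1, 0]
    (∃ X : Set (Fin 4 → ℝ), X.Finite ∧ α⁻¹ • V₀ ∈ convexHull ℝ X ∧
      ∀ u ∈ X, ∀ v ∈ X, B u v ∈ convexHull ℝ X) ∧
    ∃ C : ℝ, 0 < C ∧ ∀ (n : ℕ) (T : SimpleGraph (Fin n)),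
      T.Connected → T.IsAcyclic →
      (Nat.card {M : Set (Sym2 (Fin n)) // IsRMatching T 3 M} : ℝ) ≤ C * α ^ n := by
  have hb : 0 < α⁻¹ := inv_pos.2 (zero_lt_one.trans hα.1)
  have hb1 : α⁻¹ + α⁻¹ ^ 4 = 1 := inv_add_inv_pow_four (inv_pos.1 hb).ne' hroot
  have hgen := generators_nonneg hb.le
  have hhull := convexHull_corners hgen
  refine ⟨⟨corners (generators α⁻¹), finite_corners ?_, ?_, fun u hu v hv => ?_⟩, 2, two_pos,
    fun n T hT hacyc => ?_⟩
  · simp [generators]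
  · exact hhull ▸ endPath_mem_lowerHull hb.le (n := 0) (by norm_num)
  · rw [hhull]
    exact bilin_mem_lowerHull graft_nonneg hgen (graft_mem_lowerHull hb.le hb1)
      (corners_subset_lowerHull hgen hu) (corners_subset_lowerHull hgen hv)
  · simpa using nat_card_isRMatching_le hb hb1 hT hacyc
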